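/- Let T be a torsion class in mod Λ and M an indecomposable Λ-module. If M is a minimal extending module for T, then Filt(T ∪ {M}) covers T in tors Λ. -/

import Mathlib

/-!
Common definitions: the category `mod Λ` of finite(-dimensional) left `Λ`-modules,
torsion(-free) classes, filtration closures, bricks, minimal (co-)extending modules,
and the lattice-theoretic notions for `tors Λ` (ordered by containment).
-/

/-- A bundled (left) `Λ`-module with carrier in `Type`. -/
structure Mdl (Λ : Type) [Ring Λ] : Type 1 where
  carrier : Type
  [isAddCommGroup : AddCommGroup carrier]
  [isModule : Module Λ carrier]

attribute [instance] Mdl.isAddCommGroup Mdl.isModule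

instance {Λ : Type} [Ring Λ] : CoeSort (Mdl Λ) Type :=
  ⟨Mdl.carrier⟩

variable (Λ : Type) [Ring Λ]

/-- Bundle a module. -/
def Mdl.of (X : Type) [AddCommGroup X] [Module Λ X] : Mdl Λ :=
  { carrier := X }

/-- `M` and `N` are isomorphic `Λ`-modules. -/
def MIso (M N : Mdl Λ) : Prop :=
  Nonempty (M.carrier ≃ₗ[Λ] N.carrier)

/-- `N` is a factor (quotient) module of `M`. -/
def IsFactor (M N : Mdl Λ) : Prop :=
  ∃ f : M.carrier →ₗ[Λ] N.carrier, Function.Surjective f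

/-- `N` is a proper factor of `M` (a quotient by a nonzero submodule). -/
def IsProperFactor (M N : Mdl Λ) : Prop :=
  ∃ f : M.carrier →ₗ[Λ] N.carrier, Function.Surjective f ∧ ¬ Function.Injective f

/-- `N` is (isomorphic to) a submodule of `M`. -/
def IsSubmoduleOf (N M : Mdl Λ) : Prop :=
  ∃ f : N.carrier →ₗ[Λ] M.carrier, Function.Injective f

/-- `N` is (isomorphic to) a proper submodule of `M`. -/
def IsProperSubmoduleOf (N M : Mdl Λ) : Prop :=
  ∃ f : N.carrier →ₗ[Λ] M.carrier, Function.Injective f ∧ ¬ Function.Surjective f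

/-- `D` is (isomorphic to) a direct summand of `N`. -/
def IsSummand (D N : Mdl Λ) : Prop :=
  ∃ (i : D.carrier →ₗ[Λ] N.carrier) (p : N.carrier →ₗ[Λ] D.carrier),
    p.comp i = LinearMap.id

/-- `0 → A --f--> M --g--> B → 0` is a short exact sequence. -/
def IsSES {A M B : Mdl Λ} (f : A.carrier →ₗ[Λ] M.carrier)
    (g : M.carrier →ₗ[Λ] B.carrier) : Prop :=
  Function.Injective f ∧ Function.Surjective g ∧ LinearMap.range f = LinearMap.ker g

/-- The short exact sequence `0 → A --f--> M --g--> B → 0` splits. -/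
def SplitsSES {A M B : Mdl Λ} (_f : A.carrier →ₗ[Λ] M.carrier)
    (g : M.carrier →ₗ[Λ] B.carrier) : Prop :=
  ∃ s : B.carrier →ₗ[Λ] M.carrier, g.comp s = LinearMap.id

/-- `M` is an extension of `B` by `A`, i.e. there is a s.e.s. `0 → A → M → B → 0`. -/
def ExtOf (M A B : Mdl Λ) : Prop :=
  ∃ (f : A.carrier →ₗ[Λ] M.carrier) (g : M.carrier →ₗ[Λ] B.carrier), IsSES Λ f g

/-- A torsion class in `mod Λ`: a class of finite(-dimensional) modules containing `0`
and closed under isomorphisms, factor modules and extensions. -/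
structure IsTorsionClass (T : Set (Mdl Λ)) : Prop where
  fin : ∀ M ∈ T, Module.Finite Λ M.carrier
  zero_mem : ∀ M : Mdl Λ, Subsingleton M.carrier → M ∈ T
  iso_closed : ∀ M ∈ T, ∀ N : Mdl Λ, MIso Λ M N → N ∈ T
  factor_closed : ∀ M ∈ T, ∀ N : Mdl Λ, IsFactor Λ M N → N ∈ T
  ext_closed : ∀ A ∈ T, ∀ B ∈ T, ∀ M : Mdl Λ, ExtOf Λ M A B → M ∈ T

/-- A torsion-free class in `mod Λ`: a class of finite(-dimensional) modules containing `0`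
and closed under isomorphisms, submodules and extensions. -/
structure IsTorsionFreeClass (F : Set (Mdl Λ)) : Prop where
  fin : ∀ M ∈ F, Module.Finite Λ M.carrier
  zero_mem : ∀ M : Mdl Λ, Subsingleton M.carrier → M ∈ F
  iso_closed : ∀ M ∈ F, ∀ N : Mdl Λ, MIso Λ M N → N ∈ F
  sub_closed : ∀ M ∈ F, ∀ N : Mdl Λ, IsSubmoduleOf Λ N M → N ∈ F
  ext_closed : ∀ A ∈ F, ∀ B ∈ F, ∀ M : Mdl Λ, ExtOf Λ M A B → M ∈ F

/-- `Filt S M`: `M` admits a filtration `0 = M₀ ⊆ M₁ ⊆ ⋯ ⊆ M_l = M` whose successive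
quotients are isomorphic to modules in `S`. -/
inductive Filt (S : Set (Mdl Λ)) : Mdl Λ → Prop
  | of_subsingleton (M : Mdl Λ) (h : Subsingleton M.carrier) : Filt S M
  | step (M : Mdl Λ) (N : Submodule Λ M.carrier) (X : Mdl Λ) (hX : X ∈ S)
      (hN : Filt S (Mdl.of Λ N)) (e : Nonempty ((M.carrier ⧸ N) ≃ₗ[Λ] X.carrier)) :
      Filt S M

/-- The filtration closure `Filt(S)` as a set of modules. -/
def FiltSet (S : Set (Mdl Λ)) : Set (Mdl Λ) := {M | Filt Λ S M}

/-- `Gen(M)`: the class of factor modules of finite direct sums of copies of `M`. -/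
def GenSet (M : Mdl Λ) : Set (Mdl Λ) :=
  {N | ∃ (n : ℕ) (f : (Fin n → M.carrier) →ₗ[Λ] N.carrier), Function.Surjective f}

/-- `T^⊥ = {X ∈ mod Λ : Hom_Λ(N, X) = 0 for all N ∈ T}`. -/
def Perp (T : Set (Mdl Λ)) : Set (Mdl Λ) :=
  {X | Module.Finite Λ X.carrier ∧ ∀ N ∈ T, ∀ f : N.carrier →ₗ[Λ] X.carrier, f = 0}

/-- A brick: a module (in `mod Λ`) whose endomorphism ring is a division ring,
i.e. it is nonzero and every nonzero endomorphism is invertible. -/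
def IsBrick (M : Mdl Λ) : Prop :=
  Module.Finite Λ M.carrier ∧ Nontrivial M.carrier ∧
    ∀ f : M.carrier →ₗ[Λ] M.carrier, f ≠ 0 → Function.Bijective f

/-- An indecomposable module: nonzero, and not the direct sum of two nonzero submodules. -/
def Indec (M : Mdl Λ) : Prop :=
  Nontrivial M.carrier ∧
    ∀ p q : Submodule Λ M.carrier, IsCompl p q → p = ⊥ ∨ q = ⊥

/-- `M` is a minimal extending module for the torsion class `T`:
(P1) every proper factor of `M` is in `T`;
(P2) if `0 → M → X → N → 0` is non-split exact with `N ∈ T`, then `X ∈ T`;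
(P3) `Hom_Λ(T, M) = 0`. -/
structure IsMinExt (T : Set (Mdl Λ)) (M : Mdl Λ) : Prop where
  fin : Module.Finite Λ M.carrier
  p1 : ∀ N : Mdl Λ, IsProperFactor Λ M N → N ∈ T
  p2 : ∀ (X N : Mdl Λ) (f : M.carrier →ₗ[Λ] X.carrier) (g : X.carrier →ₗ[Λ] N.carrier),
      IsSES Λ f g → ¬ SplitsSES Λ f g → N ∈ T → X ∈ T
  p3 : ∀ N ∈ T, ∀ f : N.carrier →ₗ[Λ] M.carrier, f = 0

/-- `M` is a minimal co-extending module for the torsion-free class `F`: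
(P1') every proper submodule of `M` is in `F`;
(P2') if `0 → F' → X → M → 0` is non-split exact with `F' ∈ F`, then `X ∈ F`;
(P3') `Hom_Λ(M, F) = 0`. -/
structure IsMinCoExt (F : Set (Mdl Λ)) (M : Mdl Λ) : Prop where
  fin : Module.Finite Λ M.carrier
  p1 : ∀ N : Mdl Λ, IsProperSubmoduleOf Λ N M → N ∈ F
  p2 : ∀ (X F' : Mdl Λ) (f : F'.carrier →ₗ[Λ] X.carrier) (g : X.carrier →ₗ[Λ] M.carrier),
      IsSES Λ f g → ¬ SplitsSES Λ f g → F' ∈ F → X ∈ F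
  p3 : ∀ F' ∈ F, ∀ f : M.carrier →ₗ[Λ] F'.carrier, f = 0

/-- `T'` covers `T` in the lattice `tors Λ` of torsion classes ordered by containment. -/
def TorsCovers (T' T : Set (Mdl Λ)) : Prop :=
  IsTorsionClass Λ T' ∧ IsTorsionClass Λ T ∧ T ⊂ T' ∧
    ∀ Y : Set (Mdl Λ), IsTorsionClass Λ Y → T ⊂ Y → Y ⊆ T' → Y = T'

/-- `F'` covers `F` in the lattice `torf Λ` of torsion-free classes ordered by containment. -/
def TorfCovers (F' F : Set (Mdl Λ)) : Prop :=
  IsTorsionFreeClass Λ F' ∧ IsTorsionFreeClass Λ F ∧ F ⊂ F' ∧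
    ∀ Y : Set (Mdl Λ), IsTorsionFreeClass Λ Y → F ⊂ Y → Y ⊆ F' → Y = F'

/-- The join `⋁ A` of a family of torsion classes in `tors Λ`: the smallest torsion
class containing all members of `A`. -/
def TorsJoin (A : Set (Set (Mdl Λ))) : Set (Mdl Λ) :=
  ⋂₀ {T : Set (Mdl Λ) | IsTorsionClass Λ T ∧ ∀ S ∈ A, S ⊆ T}

/-- A completely join-irreducible element of `tors Λ`: a torsion class `T` such that
`T ∈ A` whenever `A` is a set of torsion classes with `⋁ A = T`. -/
def CompletelyJoinIrred (T : Set (Mdl Λ)) : Prop :=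
  IsTorsionClass Λ T ∧
    ∀ A : Set (Set (Mdl Λ)), (∀ S ∈ A, IsTorsionClass Λ S) → TorsJoin Λ A = T → T ∈ A

/-- The join representation `⋁ A` is irredundant in `tors Λ`:
every proper subset has strictly smaller join. -/
def TorsIrredundant (A : Set (Set (Mdl Λ))) : Prop :=
  ∀ B : Set (Set (Mdl Λ)), B ⊂ A → TorsJoin Λ B ⊂ TorsJoin Λ A

/-- `A` is the canonical join representation of its join in `tors Λ` (equivalently, a face
of the canonical join complex `Γ(tors Λ)`): `⋁ A` is irredundant, and `A ≪ B` for every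
irredundant join representation `⋁ B` of the same element. -/
def TorsCJR (A : Set (Set (Mdl Λ))) : Prop :=
  (∀ S ∈ A, IsTorsionClass Λ S) ∧ TorsIrredundant Λ A ∧
    ∀ B : Set (Set (Mdl Λ)), (∀ S ∈ B, IsTorsionClass Λ S) →
      TorsJoin Λ B = TorsJoin Λ A → TorsIrredundant Λ B → ∀ a ∈ A, ∃ b ∈ B, a ⊆ b

/-- `M` and `N` are hom-orthogonal: `Hom_Λ(M, N) = 0` and `Hom_Λ(N, M) = 0`. -/
def HomOrthogonal (M N : Mdl Λ) : Prop :=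
  (∀ f : M.carrier →ₗ[Λ] N.carrier, f = 0) ∧ ∀ f : N.carrier →ₗ[Λ] M.carrier, f = 0

/-!
Read from the bottom up, a filtration shows that every `X` in `Filt(T ∪ {M})` lies in `T` or maps
onto `M`: let `A ⊆ X` be the first step, so that `X ⧸ A` satisfies the dichotomy by induction. If
`X ⧸ A` maps onto `M`, so does `X`. Otherwise `X ⧸ A ∈ T`; then `X ∈ T` when `A ∈ T`, while for
`A ≅ M` either the sequence splits and `X` maps onto `M`, or (P2) gives `X ∈ T`. Hence a torsion
class strictly above `T` and inside `Filt(T ∪ {M})` contains `M`, and with it all of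
`Filt(T ∪ {M})`. Property (P1) makes `Filt(T ∪ {M})` closed under factors, and (P3) gives `M ∉ T`.
-/

section

variable {Λ}

theorem IsFactor.trans {X Y Z : Mdl Λ} (hXY : IsFactor Λ X Y) (hYZ : IsFactor Λ Y Z) :
    IsFactor Λ X Z :=
  let ⟨f, hf⟩ := hXY
  let ⟨g, hg⟩ := hYZ
  ⟨g ∘ₗ f, hg.comp hf⟩

theorem MIso.isFactor_symm {X Y : Mdl Λ} (h : MIso Λ X Y) : IsFactor Λ Y X :=
  let ⟨e⟩ := h
  ⟨e.symm.toLinearMap, e.symm.surjective⟩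

section ShortExact

variable {A X B : Mdl Λ} {f : A.carrier →ₗ[Λ] X.carrier} {g : X.carrier →ₗ[Λ] B.carrier}

theorem isSES_iff :
    IsSES Λ f g ↔ Function.Injective f ∧ Function.Surjective g ∧ Function.Exact f g := by
  rw [IsSES, LinearMap.exact_iff, eq_comm (a := LinearMap.range f)]

theorem IsSES.isFactor_of_splits (h : IsSES Λ f g) (hs : SplitsSES Λ f g) :
    IsFactor Λ X A := by
  obtain ⟨hf, -, hfg⟩ := isSES_iff.mp h
  have hretract : Function.Surjective g ∧ ∃ r, r ∘ₗ f = LinearMap.id :=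
    (hfg.split_tfae'.out 0 1 rfl rfl).mp ⟨hf, hs⟩
  obtain ⟨-, r, hr⟩ := hretract
  exact ⟨r, fun a => ⟨f a, LinearMap.congr_fun hr a⟩⟩

theorem IsSES.extOf_comap (h : IsSES Λ f g) (N : Submodule Λ B.carrier) :
    ExtOf Λ (Mdl.of Λ (N.comap g)) A (Mdl.of Λ N) := by
  obtain ⟨hf, hg, hfg⟩ := isSES_iff.mp h
  have hmem (a : A.carrier) : f a ∈ N.comap g := by
    simp only [Submodule.mem_comap, hfg.apply_apply_eq_zero, zero_mem]
  let f' : A.carrier →ₗ[Λ] N.comap g := f.codRestrict (N.comap g) hmem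
  let g' : N.comap g →ₗ[Λ] N := g.restrict fun _ hx => hx
  have hf' : Function.Injective f' := fun _ _ hab => hf (congrArg Subtype.val hab)
  have hg' : Function.Surjective g' := by
    rintro ⟨b, hb⟩
    obtain ⟨x, rfl⟩ := hg b
    exact ⟨⟨x, hb⟩, rfl⟩
  have hexact : Function.Exact f' g' := fun x => by
    rw [Subtype.ext_iff, Set.mem_range]
    simp only [Subtype.ext_iff]
    exact hfg x
  exact ⟨f', g', isSES_iff.mpr ⟨hf', hg', hexact⟩⟩

theorem IsSES.extOf_quotient_map (h : IsSES Λ f g) (N : Submodule Λ A.carrier) :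
    ExtOf Λ (Mdl.of Λ (X.carrier ⧸ N.map f)) (Mdl.of Λ (A.carrier ⧸ N)) B := by
  obtain ⟨hf, hg, hfg⟩ := isSES_iff.mp h
  have hker : N.map f ≤ LinearMap.ker g := by
    rintro _ ⟨a, -, rfl⟩
    exact hfg.apply_apply_eq_zero a
  let f' : (A.carrier ⧸ N) →ₗ[Λ] (X.carrier ⧸ N.map f) := N.mapQ (N.map f) f (N.le_comap_map f)
  let g' : (X.carrier ⧸ N.map f) →ₗ[Λ] B.carrier := (N.map f).liftQ g hker
  have hf' : Function.Injective f' := by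
    rw [← LinearMap.ker_eq_bot, Submodule.ker_mapQ, Submodule.comap_map_eq_of_injective hf,
      N.mkQ_map_self]
  have hg' : Function.Surjective g' := by
    rw [← LinearMap.range_eq_top, Submodule.range_liftQ, LinearMap.range_eq_top.mpr hg]
  have hexact : Function.Exact f' g' := by
    rw [LinearMap.exact_iff, Submodule.ker_liftQ, Submodule.range_mapQ, hfg.linearMap_ker_eq]
  exact ⟨f', g', isSES_iff.mpr ⟨hf', hg', hexact⟩⟩

end ShortExact

theorem ExtOf.isFactor {X A B : Mdl Λ} (h : ExtOf Λ X A B) : IsFactor Λ X B :=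
  let ⟨_, g, hfg⟩ := h
  ⟨g, hfg.2.1⟩

theorem ExtOf.congr {X A A' B B' : Mdl Λ} (h : ExtOf Λ X A B) (hA : MIso Λ A A')
    (hB : MIso Λ B B') : ExtOf Λ X A' B' := by
  obtain ⟨f, g, hfg⟩ := h
  obtain ⟨hf, hg, hexact⟩ := isSES_iff.mp hfg
  obtain ⟨eA⟩ := hA
  obtain ⟨eB⟩ := hB
  refine ⟨f ∘ₗ eA.symm.toLinearMap, eB.toLinearMap ∘ₗ g, isSES_iff.mpr
    ⟨hf.comp eA.symm.injective, eB.surjective.comp hg, ?_⟩⟩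
  rwa [LinearEquiv.postcomp_exact_iff_exact, LinearEquiv.precomp_exact_iff_exact]

theorem ExtOf.of_submodule (X : Mdl Λ) (N : Submodule Λ X.carrier) :
    ExtOf Λ X (Mdl.of Λ N) (Mdl.of Λ (X.carrier ⧸ N)) :=
  ⟨N.subtype, N.mkQ, isSES_iff.mpr
    ⟨N.injective_subtype, N.mkQ_surjective, LinearMap.exact_subtype_mkQ N⟩⟩

theorem Filt.of_mIso {S : Set (Mdl Λ)} {X Y : Mdl Λ} (hX : Filt Λ S X) (h : MIso Λ X Y) :
    Filt Λ S Y := by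
  induction hX generalizing Y with
  | of_subsingleton X hX =>
    obtain ⟨φ⟩ := h
    exact .of_subsingleton Y φ.symm.injective.subsingleton
  | step X N A hA _ e ih =>
    obtain ⟨φ⟩ := h
    obtain ⟨e⟩ := e
    exact .step Y (N.map φ.toLinearMap) A hA (ih ⟨φ.submoduleMap N⟩)
      ⟨(Submodule.Quotient.equiv N _ φ rfl).symm.trans e⟩

theorem Filt.of_extOf {S : Set (Mdl Λ)} {X A B : Mdl Λ} (hA : Filt Λ S A) (hB : Filt Λ S B)
    (h : ExtOf Λ X A B) : Filt Λ S X := by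
  induction hB generalizing X with
  | of_subsingleton B hB =>
    obtain ⟨f, g, hf, -, hfg⟩ := h
    have hf' : LinearMap.range f = ⊤ := by
      rw [hfg, LinearMap.ker_eq_top]
      exact LinearMap.ext fun _ => Subsingleton.elim _ _
    exact hA.of_mIso ⟨LinearEquiv.ofBijective f ⟨hf, LinearMap.range_eq_top.mp hf'⟩⟩
  | step B N C hC _ e ih =>
    obtain ⟨f, g, hfg⟩ := h
    obtain ⟨e⟩ := e
    have hg : Function.Surjective (N.mkQ ∘ₗ g) := N.mkQ_surjective.comp hfg.2.1
    have hker : N.comap g = LinearMap.ker (N.mkQ ∘ₗ g) := by rw [LinearMap.ker_comp, N.ker_mkQ]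
    exact .step X (N.comap g) C hC (ih (hfg.extOf_comap N))
      ⟨(Submodule.quotEquivOfEq _ _ hker).trans
        (((N.mkQ ∘ₗ g).quotKerEquivOfSurjective hg).trans e)⟩

theorem Filt.of_isFactor {S : Set (Mdl Λ)}
    (hS : ∀ A ∈ S, ∀ Q : Mdl Λ, IsFactor Λ A Q → Filt Λ S Q)
    {X Q : Mdl Λ} (hX : Filt Λ S X) (hQ : IsFactor Λ X Q) : Filt Λ S Q := by
  induction hX generalizing Q with
  | of_subsingleton X hX =>
    obtain ⟨f, hf⟩ := hQ
    exact .of_subsingleton Q hf.subsingleton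
  | step X N A hA _ e ih =>
    obtain ⟨f, hf⟩ := hQ
    have hsub : Filt Λ S (Mdl.of Λ (N.map f)) :=
      ih ⟨f.submoduleMap N, f.submoduleMap_surjective N⟩
    have hmap : Function.Surjective (N.mapQ (N.map f) f (N.le_comap_map f)) := by
      rw [← LinearMap.range_eq_top, Submodule.range_mapQ, LinearMap.range_eq_top.mpr hf,
        Submodule.map_top, Submodule.range_mkQ]
    have hfactor : IsFactor Λ (Mdl.of Λ (X.carrier ⧸ N)) (Mdl.of Λ (Q.carrier ⧸ N.map f)) :=
      ⟨_, hmap⟩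
    have hquot : MIso Λ (Mdl.of Λ (X.carrier ⧸ N)) A := e
    exact hsub.of_extOf (hS A hA _ (hquot.isFactor_symm.trans hfactor)) (.of_submodule Q _)

theorem Filt.finite {S : Set (Mdl Λ)} (hS : ∀ A ∈ S, Module.Finite Λ A.carrier) {X : Mdl Λ}
    (hX : Filt Λ S X) : Module.Finite Λ X.carrier := by
  induction hX with
  | of_subsingleton X hX => infer_instance
  | step X N A hA _ e ih =>
    obtain ⟨e⟩ := e
    have := hS A hA
    have : Module.Finite Λ N := ih
    have : Module.Finite Λ (X.carrier ⧸ N) := .equiv e.symm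
    exact .of_submodule_quotient N

theorem subset_filtSet (S : Set (Mdl Λ)) : S ⊆ FiltSet Λ S := by
  intro X hX
  have hbot : Subsingleton (⊥ : Submodule Λ X.carrier) := inferInstance
  exact Filt.step X ⊥ X hX (.of_subsingleton _ hbot) ⟨Submodule.quotEquivOfEqBot ⊥ rfl⟩

theorem filtSet_subset {S Y : Set (Mdl Λ)} (hY : IsTorsionClass Λ Y) (hS : S ⊆ Y) :
    FiltSet Λ S ⊆ Y := by
  intro X hX
  induction hX with
  | of_subsingleton X hX => exact hY.zero_mem X hX
  | step X N A hA _ e ih =>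
    exact hY.ext_closed _ ih A (hS hA) X ((ExtOf.of_submodule X N).congr ⟨.refl _ _⟩ e)

theorem isTorsionClass_filtSet {S : Set (Mdl Λ)} (hfin : ∀ A ∈ S, Module.Finite Λ A.carrier)
    (hfactor : ∀ A ∈ S, ∀ Q : Mdl Λ, IsFactor Λ A Q → Filt Λ S Q) :
    IsTorsionClass Λ (FiltSet Λ S) where
  fin _ hX := hX.finite hfin
  zero_mem := Filt.of_subsingleton
  iso_closed _ hX _ := hX.of_mIso
  factor_closed _ hX _ := hX.of_isFactor hfactor
  ext_closed _ hA _ hB _ := hA.of_extOf hB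

-- The inductive type `Filt` adds factors on top; carrying an arbitrary `B ∈ C` above `A` through
-- the induction turns it into an induction from the bottom.
theorem Filt.mem_of_extOf {S C : Set (Mdl Λ)} (hiso : ∀ B ∈ C, ∀ X : Mdl Λ, MIso Λ B X → X ∈ C)
    (hext : ∀ A ∈ S, ∀ B ∈ C, ∀ X : Mdl Λ, ExtOf Λ X A B → X ∈ C)
    {A B X : Mdl Λ} (hA : Filt Λ S A) (hB : B ∈ C) (h : ExtOf Λ X A B) : X ∈ C := by
  induction hA generalizing B X with
  | of_subsingleton A hA =>
    obtain ⟨f, g, -, hg, hfg⟩ := h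
    have hg' : LinearMap.ker g = ⊥ := by
      rw [← hfg, LinearMap.range_eq_bot]
      exact LinearMap.ext fun a => by rw [Subsingleton.elim a 0, map_zero, map_zero]
    exact hiso B hB X ⟨(LinearEquiv.ofBijective g ⟨LinearMap.ker_eq_bot.mp hg', hg⟩).symm⟩
  | step A N D hD _ e ih =>
    obtain ⟨f, g, hfg⟩ := h
    have hquot : Mdl.of Λ (X.carrier ⧸ N.map f) ∈ C :=
      hext D hD B hB _ ((hfg.extOf_quotient_map N).congr e ⟨.refl _ _⟩)
    exact ih hquot ((ExtOf.of_submodule X (N.map f)).congr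
      ⟨(N.equivMapOfInjective f hfg.1).symm⟩ ⟨.refl _ _⟩)

section MinimalExtending

variable {T : Set (Mdl Λ)} {M : Mdl Λ}

theorem IsMinExt.notMem (hM : IsMinExt Λ T M)
    (hM₀ : Nontrivial M.carrier) : M ∉ T := by
  intro hMT
  obtain ⟨x, hx⟩ := exists_ne (0 : M.carrier)
  exact hx (LinearMap.congr_fun (hM.p3 M hMT LinearMap.id) x)

theorem IsMinExt.filt_of_isFactor (hT : IsTorsionClass Λ T) (hM : IsMinExt Λ T M)
    {A Q : Mdl Λ} (hA : A ∈ insert M T) (hQ : IsFactor Λ A Q) :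
    Filt Λ (insert M T) Q := by
  rcases hA with rfl | hA
  · obtain ⟨f, hf⟩ := hQ
    by_cases hf' : Function.Injective f
    · exact Filt.of_mIso (subset_filtSet _ (.inl rfl)) ⟨LinearEquiv.ofBijective f ⟨hf', hf⟩⟩
    · exact subset_filtSet _ (.inr (hM.p1 Q ⟨f, hf, hf'⟩))
  · exact subset_filtSet _ (.inr (hT.factor_closed A hA Q hQ))

theorem IsMinExt.isTorsionClass_filtSet_insert (hT : IsTorsionClass Λ T)
    (hM : IsMinExt Λ T M) : IsTorsionClass Λ (FiltSet Λ (insert M T)) := by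
  refine isTorsionClass_filtSet ?_ fun A hA Q => hM.filt_of_isFactor hT hA
  rintro A (rfl | hA)
  exacts [hM.fin, hT.fin A hA]

theorem IsMinExt.mem_or_isFactor_of_extOf (hT : IsTorsionClass Λ T) (hM : IsMinExt Λ T M)
    {A B X : Mdl Λ} (hA : A ∈ insert M T) (hB : B ∈ T ∨ IsFactor Λ B M)
    (h : ExtOf Λ X A B) : X ∈ T ∨ IsFactor Λ X M := by
  rcases hB with hB | hB
  · rcases hA with rfl | hA
    · obtain ⟨f, g, hfg⟩ := h
      by_cases hsplit : SplitsSES Λ f g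
      · exact .inr (hfg.isFactor_of_splits hsplit)
      · exact .inl (hM.p2 X B f g hfg hsplit hB)
    · exact .inl (hT.ext_closed A hA B hB X h)
  · exact .inr (h.isFactor.trans hB)

theorem IsMinExt.mem_or_isFactor (hT : IsTorsionClass Λ T) (hM : IsMinExt Λ T M)
    {X : Mdl Λ} (hX : Filt Λ (insert M T) X) :
    X ∈ T ∨ IsFactor Λ X M := by
  let C : Set (Mdl Λ) := {Y | Y ∈ T ∨ IsFactor Λ Y M}
  have hiso (B : Mdl Λ) (hB : B ∈ C) (Y : Mdl Λ) (e : MIso Λ B Y) : Y ∈ C :=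
    hB.imp (hT.iso_closed B · Y e) e.isFactor_symm.trans
  have hzero : Mdl.of Λ (X.carrier ⧸ (⊤ : Submodule Λ X.carrier)) ∈ C :=
    .inl (hT.zero_mem _ (inferInstanceAs (Subsingleton (X.carrier ⧸ ⊤))))
  exact hX.mem_of_extOf hiso (fun A hA B hB Y => hM.mem_or_isFactor_of_extOf hT hA hB) hzero
    ((ExtOf.of_submodule X ⊤).congr ⟨Submodule.topEquiv⟩ ⟨.refl _ _⟩)

theorem statement9_general (hT : IsTorsionClass Λ T) (hM₀ : Nontrivial M.carrier)
    (hM : IsMinExt Λ T M) :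
    TorsCovers Λ (FiltSet Λ (insert M T)) T := by
  have hsub : insert M T ⊆ FiltSet Λ (insert M T) := subset_filtSet _
  refine ⟨hM.isTorsionClass_filtSet_insert hT, hT,
    ⟨(Set.subset_insert M T).trans hsub, fun h => hM.notMem hM₀ (h (hsub (.inl rfl)))⟩, ?_⟩
  intro Y hY hTY hYF
  obtain ⟨X, hXY, hXT⟩ := Set.exists_of_ssubset hTY
  have hXM : IsFactor Λ X M := (hM.mem_or_isFactor hT (hYF hXY)).resolve_left hXT
  have hMY : M ∈ Y := hY.factor_closed X hXY M hXM
  exact hYF.antisymm (filtSet_subset hY (Set.insert_subset hMY hTY.subset))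

end MinimalExtending

end

/-- Let `T` be a torsion class in `mod Λ` and `M` an indecomposable
`Λ`-module.  If `M` is a minimal extending module for `T`, then `Filt(T ∪ {M})`
covers `T` in `tors Λ`. -/
theorem statement9 (k : Type) [Field k] (Λ : Type) [Ring Λ] [Algebra k Λ]
    [FiniteDimensional k Λ] (T : Set (Mdl Λ)) (hT : IsTorsionClass Λ T)
    (M : Mdl Λ) (hMindec : Indec Λ M) (hmin : IsMinExt Λ T M) :
    TorsCovers Λ (FiltSet Λ (insert M T)) T := by
  exact statement9_general hT hMindec.1 hmin
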